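/- (Corollary in the light-tail case.) Let φ : ℕ → ℝ with φ_i ≥ 0, φ_0 = 0, ∑_{i=1}^∞ φ_i = 1, and assume m := ∑_{i=1}^∞ i φ_i < ∞. Let (a_n)_{n≥1} satisfy 0 < a_n < 1 and n(1−a_n) → λ for some λ > 0, and write ψ^n := ψ^{a_n}. Then sup_{x ∈ [0,1]} | ∑_{i=0}^{⌊nx⌋} ψ^n_i (1−a_n) − (1 − e^{−(λ/m)x}) | → 0 as n → ∞. -/

import Mathlib

open MeasureTheory ProbabilityTheory Filter Set

/-- Convolution powers of a sequence. -/
noncomputable def convPow (φ : ℕ → ℝ) : ℕ → ℕ → ℝ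
  | 0 => fun i => if i = 0 then 1 else 0
  | (l + 1) => fun k => ∑ j ∈ Finset.range (k + 1), convPow φ l j * φ (k - j)

/-- ψ^a_i = ∑_{l=0}^∞ a^l (φ^{*l})_i. -/
noncomputable def psiSeq (a : ℝ) (φ : ℕ → ℝ) (i : ℕ) : ℝ :=
  ∑' l : ℕ, a ^ l * convPow φ l i

/-- Fourier transform of a sequence indexed by ℕ. -/
noncomputable def fourierSeq (f : ℕ → ℝ) (z : ℝ) : ℂ :=
  ∑' k : ℕ, (f k : ℂ) * Complex.exp (-(2 * Real.pi * Complex.I * k * z))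

/-- Mittag-Leffler function E_{α,α}. -/
noncomputable def mittagLeffler (α u : ℝ) : ℝ :=
  ∑' k : ℕ, u ^ k / Real.Gamma (α * k + α)

/-- f^{α,λ}. -/
noncomputable def mlDensity (α lam s : ℝ) : ℝ :=
  lam * s ^ (α - 1) * mittagLeffler α (-lam * s ^ α)

/-- F^{α,λ}. -/
noncomputable def mlCDF (α lam x : ℝ) : ℝ :=
  ∫ s in (0:ℝ)..x, mlDensity α lam s

namespace LT

lemma convPow_nonneg (φ : ℕ → ℝ) (h : ∀ i, 0 ≤ φ i) (l i : ℕ) : 0 ≤ convPow φ l i := by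
  induction l generalizing i with
  | zero => simp only [convPow]; split_ifs <;> norm_num
  | succ l ih => 
    simp only [convPow]
    exact Finset.sum_nonneg fun j _ => mul_nonneg (ih j) (h _)

lemma convPow_le_one (φ : ℕ → ℝ) (h : ∀ i, 0 ≤ φ i)
    (hp : ∀ k, ∑ i ∈ Finset.range k, φ i ≤ 1) (l i : ℕ) : convPow φ l i ≤ 1 := by
  induction l generalizing i with
  | zero => simp only [convPow]; split_ifs <;> norm_num
  | succ l ih => 
    simp only [convPow]
    calc _ ≤ ∑ j ∈ Finset.range (i + 1), φ (i - j) :=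
          Finset.sum_le_sum fun j _ => mul_le_of_le_one_left (h _) (ih j)
      _ = ∑ j ∈ Finset.range (i + 1), φ j := by
          have := Finset.sum_range_reflect φ (i + 1)
          simpa using this
      _ ≤ 1 := hp _

lemma psi_summable (φ : ℕ → ℝ) (h : ∀ i, 0 ≤ φ i)
    (hp : ∀ k, ∑ i ∈ Finset.range k, φ i ≤ 1) (a : ℝ) (h0 : 0 < a) (h1 : a < 1) (i : ℕ) :
    Summable fun l : ℕ => a ^ l * convPow φ l i := by
  refine Summable.of_nonneg_of_le
    (fun l => mul_nonneg (by positivity) (convPow_nonneg φ h l i)) (fun l => ?_)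
    (summable_geometric_of_lt_one h0.le h1)
  exact mul_le_of_le_one_right (by positivity) (convPow_le_one φ h hp l i)

lemma psi_nonneg (φ : ℕ → ℝ) (h : ∀ i, 0 ≤ φ i) (a : ℝ) (h0 : 0 < a) (i : ℕ) :
    0 ≤ psiSeq a φ i :=
  tsum_nonneg fun l => mul_nonneg (by positivity) (convPow_nonneg φ h l i)

lemma psi_renewal (φ : ℕ → ℝ) (h : ∀ i, 0 ≤ φ i)
    (hp : ∀ k, ∑ i ∈ Finset.range k, φ i ≤ 1) (a : ℝ) (h0 : 0 < a) (h1 : a < 1) (k : ℕ) :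
    psiSeq a φ k = (if k = 0 then 1 else 0) +
      a * ∑ j ∈ Finset.range (k + 1), psiSeq a φ j * φ (k - j) := by
  have hs := psi_summable φ h hp a h0 h1
  unfold psiSeq
  rw [(hs k).tsum_eq_zero_add]
  congr 1
  · simp [convPow]
  · simp_rw [← tsum_mul_right]
    rw [← Summable.tsum_finsetSum (fun j _ => (hs j).mul_right _), ← tsum_mul_left]
    congr 1
    ext l
    simp only [convPow, Finset.mul_sum, pow_succ]
    refine Finset.sum_congr rfl fun j _ => by ring

/-- abstract recursion -/
lemma ident1 (φ ψ T : ℕ → ℝ) (a : ℝ) (hφ0 : φ 0 = 0)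
    (hr : ∀ k, ψ k = (if k = 0 then 1 else 0) + a * ∑ j ∈ Finset.range (k + 1), ψ j * φ (k - j))
    (hT0 : T 0 = 1) (hT : ∀ k, T (k + 1) = T k - φ (k + 1)) (N : ℕ) :
    (1 - a) * ∑ i ∈ Finset.range (N + 1), ψ i
      + a * ∑ j ∈ Finset.range (N + 1), ψ j * T (N - j) = 1 := by
  induction N with
  | zero => 
    have := hr 0
    simp [hφ0] at this
    simp [hT0, this]
  | succ N ih =>
    have h1 := hr (N + 1)
    rw [Finset.sum_range_succ] at h1
    have h2 : ∑ j ∈ Finset.range (N + 1), ψ j * T (N + 1 - j)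
        = ∑ j ∈ Finset.range (N + 1), ψ j * T (N - j)
          - ∑ j ∈ Finset.range (N + 1), ψ j * φ (N + 1 - j) := by
      rw [← Finset.sum_sub_distrib]
      refine Finset.sum_congr rfl fun j hj => ?_
      have : N + 1 - j = (N - j) + 1 := by have := Finset.mem_range.1 hj; omega
      rw [this, hT]; ring
    rw [Finset.sum_range_succ, Finset.sum_range_succ _ (N + 1), h2]
    simp [hφ0] at h1
    simp only [Nat.sub_self, hT0]
    linarith

lemma ident2 (ψ T : ℕ → ℝ) (N : ℕ) :
    ∑ k ∈ Finset.range (N + 1), ∑ j ∈ Finset.range (k + 1), ψ j * T (k - j)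
      = ∑ k ∈ Finset.range (N + 1), T k * ∑ i ∈ Finset.range (N - k + 1), ψ i := by
  induction N with
  | zero => simp [mul_comm]
  | succ N ih =>
    rw [Finset.sum_range_succ, ih,
      Finset.sum_range_succ (fun k => T k * ∑ i ∈ Finset.range (N + 1 - k + 1), ψ i) (N + 1)]
    have h2 : ∑ k ∈ Finset.range (N + 1), T k * ∑ i ∈ Finset.range (N + 1 - k + 1), ψ i
        = ∑ k ∈ Finset.range (N + 1), T k * ∑ i ∈ Finset.range (N - k + 1), ψ i
          + ∑ k ∈ Finset.range (N + 1), T k * ψ (N + 1 - k) := by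
      rw [← Finset.sum_add_distrib]
      refine Finset.sum_congr rfl fun j hj => ?_
      have : N + 1 - j = (N - j) + 1 := by have := Finset.mem_range.1 hj; omega
      rw [this, Finset.sum_range_succ]; ring
    rw [h2]
    have h3 : ∑ j ∈ Finset.range (N + 1 + 1), ψ j * T (N + 1 - j)
        = ∑ k ∈ Finset.range (N + 1 + 1), T k * ψ (N + 1 - k) := by
      rw [← Finset.sum_range_reflect]
      refine Finset.sum_congr rfl fun j hj => ?_
      have hj := Finset.mem_range.1 hj
      have e1 : N + 1 + 1 - 1 - j = N + 1 - j := by omega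
      have e2 : N + 1 - (N + 1 - j) = j := by omega
      rw [e1, e2, mul_comm]
    rw [h3, Finset.sum_range_succ _ (N + 1)]
    simp
    ring

lemma tail_hasSum (φ : ℕ → ℝ) (h : ∀ i, 0 ≤ φ i) (h1 : HasSum φ 1)
    (hφ0 : φ 0 = 0) (m : ℝ) (hm : HasSum (fun i : ℕ => (i : ℝ) * φ i) m) :
    HasSum (fun k => 1 - ∑ i ∈ Finset.range (k + 1), φ i) m := by
  have hle : ∀ k, ∑ i ∈ Finset.range k, φ i ≤ 1 := fun k =>
    sum_le_hasSum _ (fun i _ => h i) h1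
  rw [hasSum_iff_tendsto_nat_of_nonneg (fun k => sub_nonneg.2 (hle _))]
  have hid : ∀ K : ℕ, ∑ k ∈ Finset.range K, (1 - ∑ i ∈ Finset.range (k + 1), φ i)
      = ∑ i ∈ Finset.range (K + 1), (i : ℝ) * φ i
        + K * (1 - ∑ i ∈ Finset.range (K + 1), φ i) := by
    intro K
    induction K with
    | zero => simp
    | succ K ih =>
      rw [Finset.sum_range_succ, ih, Finset.sum_range_succ _ (K + 1),
        Finset.sum_range_succ _ (K + 1)]
      push_cast; ring
  have hlim := (hm.tendsto_sum_nat).comp (tendsto_add_atTop_nat 1)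
  refine tendsto_of_tendsto_of_tendsto_of_le_of_le hlim tendsto_const_nhds ?_ ?_
  · intro K
    simp only [Function.comp]
    rw [hid K]
    have := mul_nonneg (Nat.cast_nonneg (α := ℝ) K) (sub_nonneg.2 (hle (K + 1)))
    linarith
  · intro K
    simp only
    rw [hid K]
    have t1 := (hasSum_nat_add_iff' (K + 1)).2 h1
    have t2 := (hasSum_nat_add_iff' (K + 1)).2 hm
    have := hasSum_le (fun i => ?_) (t1.mul_left (K : ℝ)) t2
    · linarith
    · refine mul_le_mul_of_nonneg_right ?_ (h _)
      push_cast
      have : (0:ℝ) ≤ i := Nat.cast_nonneg i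
      linarith

lemma rec_bound (G : ℕ → ℝ) (c e : ℝ) (hc : 0 < c) 
    (hG : ∀ N, |G N + c * ∑ k ∈ Finset.range (N + 1), G k - c * (N + 1)| ≤ e) (N : ℕ) :
    |G N - (1 - (1 / (1 + c)) ^ (N + 1))| ≤ 2 * e := by
  set r := 1 / (1 + c) with hr
  have hrc : r * (1 + c) = 1 := by rw [hr]; field_simp
  have hH : ∀ N : ℕ, (1 - r ^ (N + 1)) + c * ∑ k ∈ Finset.range (N + 1), (1 - r ^ (k + 1))
      = c * (N + 1) := by
    intro N
    induction N with
    | zero => simp; linear_combination -hrc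
    | succ N ih =>
      rw [Finset.sum_range_succ]
      push_cast
      linear_combination ih - r ^ (N + 1) * hrc
  set D : ℕ → ℝ := fun N => G N - (1 - r ^ (N + 1)) with hD
  have hDe : ∀ N, |D N + c * ∑ k ∈ Finset.range (N + 1), D k| ≤ e := by
    intro N
    convert hG N using 2
    rw [← hH N]
    simp only [hD, Finset.sum_sub_distrib]
    ring
  have he : 0 ≤ e := (abs_nonneg _).trans (hG 0)
  have hS : ∀ N, c * |∑ k ∈ Finset.range N, D k| ≤ e := by
    intro N
    induction N with
    | zero => simpa
    | succ N ih =>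
      have h1 := hDe N
      have h2 : (1 + c) * |∑ k ∈ Finset.range (N + 1), D k| ≤
          |∑ k ∈ Finset.range N, D k| + e := by
        rw [← abs_of_pos (show 0 < 1 + c by linarith), ← abs_mul]
        have : (1 + c) * ∑ k ∈ Finset.range (N + 1), D k = ∑ k ∈ Finset.range N, D k
          + (D N + c * ∑ k ∈ Finset.range (N + 1), D k) := by
          rw [Finset.sum_range_succ]; ring
        rw [this]
        exact (abs_add_le _ _).trans (by linarith)
      have h3 := mul_le_mul_of_nonneg_left h2 hc.le
      have h4 : (1 + c) * (c * |∑ k ∈ Finset.range (N + 1), D k|) ≤ (1 + c) * e := by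
        linarith
      exact le_of_mul_le_mul_left h4 (by linarith)
  have h5 := hS (N + 1)
  have h6 := hDe N
  have h7 : |c * ∑ k ∈ Finset.range (N + 1), D k| ≤ e := by
    rwa [abs_mul, abs_of_pos hc]
  change |D N| ≤ _
  rw [abs_le] at h6 h7 ⊢
  constructor <;> linarith [h7.1, h7.2, h6.1, h6.2]

lemma core (φ : ℕ → ℝ) (h : ∀ i, 0 ≤ φ i) (h1 : HasSum φ 1)
    (hφ0 : φ 0 = 0) (m : ℝ) (hm0 : 0 < m) (T : ℕ → ℝ)
    (hTdef : T = fun k => 1 - ∑ i ∈ Finset.range (k + 1), φ i) (hT : HasSum T m)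
    (a : ℝ) (ha0 : 0 < a) (ha1 : a < 1) (N : ℕ) :
    |∑ i ∈ Finset.range (N + 1), psiSeq a φ i * (1 - a) -
      (1 - (1 / (1 + (1 - a) / (a * m))) ^ (N + 1))|
      ≤ 2 * ((∑' k : ℕ, T k * min 1 (k * ((1 - a) / a))) / m) := by
  have hle : ∀ k, ∑ i ∈ Finset.range k, φ i ≤ 1 := fun k =>
    sum_le_hasSum _ (fun i _ => h i) h1
  have hTnn : ∀ k, 0 ≤ T k := fun k => by rw [hTdef]; exact sub_nonneg.2 (hle _)
  have hT0 : T 0 = 1 := by simp [hTdef, hφ0]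
  have hTs : ∀ k, T (k + 1) = T k - φ (k + 1) := fun k => by
    simp only [hTdef]; rw [Finset.sum_range_succ _ (k + 1)]; ring
  set ψ := psiSeq a φ with hψ
  have hψnn : ∀ i, 0 ≤ ψ i := psi_nonneg φ h a ha0
  have id1 := ident1 φ ψ T a hφ0 (psi_renewal φ h hle a ha0 ha1) hT0 hTs
  set G : ℕ → ℝ := fun N => ∑ i ∈ Finset.range (N + 1), ψ i * (1 - a) with hG
  have hGS : ∀ N, G N = (1 - a) * ∑ i ∈ Finset.range (N + 1), ψ i := fun N => by
    simp only [hG]; rw [← Finset.sum_mul, mul_comm]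
  have hGnn : ∀ N, 0 ≤ G N := fun N => Finset.sum_nonneg fun i _ =>
    mul_nonneg (hψnn i) (by linarith)
  have hconv : ∀ N, 0 ≤ ∑ j ∈ Finset.range (N + 1), ψ j * T (N - j) := fun N =>
    Finset.sum_nonneg fun j _ => mul_nonneg (hψnn _) (hTnn _)
  have hG1 : ∀ N, G N ≤ 1 := fun N => by
    have h2 := mul_nonneg ha0.le (hconv N)
    have h3 := id1 N
    rw [← hGS] at h3
    linarith
  have hψ1 : ∀ N, ψ N * (1 - a) ≤ (1 - a) / a := fun N => by
    have h2 : ψ N ≤ ∑ j ∈ Finset.range (N + 1), ψ j * T (N - j) := by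
      have := Finset.single_le_sum (f := fun j => ψ j * T (N - j)) (s := Finset.range (N + 1))
        (fun j _ => mul_nonneg (hψnn _) (hTnn _)) (Finset.self_mem_range_succ N)
      simpa [hT0] using this
    have h3 := id1 N
    rw [← hGS] at h3
    have h4 := mul_le_mul_of_nonneg_left h2 ha0.le
    have h5 := hGnn N
    rw [le_div_iff₀ ha0]
    nlinarith
  set δ := (1 - a) / a with hδ
  have hδ0 : 0 < δ := div_pos (by linarith) ha0
  have hGinc : ∀ M k : ℕ, G M ≤ G (M + k) ∧ G (M + k) ≤ G M + k * δ := by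
    intro M k
    induction k with
    | zero => simp
    | succ k ih =>
      have : G (M + (k + 1)) = G (M + k) + ψ (M + k + 1) * (1 - a) := by
        simp only [hG]; rw [← add_assoc, Finset.sum_range_succ _ (M + k + 1)]
      have h2 := hψ1 (M + k + 1)
      have h3 := mul_nonneg (hψnn (M + k + 1)) (show 0 ≤ 1 - a by linarith)
      push_cast
      constructor <;> linarith [ih.1, ih.2]
  have hG0 : G 0 ≤ δ := by have := hψ1 0; simpa [hG] using this
  have hpk : Summable (fun k : ℕ => T k * min 1 (k * δ)) := by
    refine Summable.of_nonneg_of_le (fun k => mul_nonneg (hTnn k) (by positivity))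
      (fun k => ?_) hT.summable
    exact mul_le_of_le_one_right (hTnn k) (min_le_left _ _)
  have herr : ∀ N, |m * G N - ∑ k ∈ Finset.range (N + 1), T k * G (N - k)| ≤
      ∑' k : ℕ, T k * min 1 (k * δ) := by
    intro N
    have hs1 : HasSum (fun k => T k * G N) (m * G N) := hT.mul_right _
    have hs2 : HasSum (fun k => if k ∈ Finset.range (N + 1) then T k * G (N - k) else 0)
        (∑ k ∈ Finset.range (N + 1), T k * G (N - k)) := by
      have := hasSum_sum_of_ne_finset_zero (L := SummationFilter.unconditional ℕ)
        (f := fun k => if k ∈ Finset.range (N + 1) then T k * G (N - k) else 0)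
        (s := Finset.range (N + 1)) (fun b hb => if_neg hb)
      convert this using 1
      exact Finset.sum_congr rfl fun k hk => (if_pos hk).symm
    have hs3 := hs1.sub hs2
    have key : ∀ k, 0 ≤ T k * G N - (if k ∈ Finset.range (N + 1) then T k * G (N - k) else 0) ∧
        T k * G N - (if k ∈ Finset.range (N + 1) then T k * G (N - k) else 0)
          ≤ T k * min 1 (k * δ) := by
      intro k
      split_ifs with hk
      · have hk := Finset.mem_range.1 hk
        have h2 := hGinc (N - k) k
        rw [Nat.sub_add_cancel (by omega)] at h2
        rw [← mul_sub]
        refine ⟨mul_nonneg (hTnn k) (by linarith [h2.1]), mul_le_mul_of_nonneg_left ?_ (hTnn k)⟩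
        exact le_min (by linarith [hG1 N, hGnn (N - k)]) (by linarith [h2.2])
      · have hk : N + 1 ≤ k := by simpa using hk
        rw [sub_zero]
        refine ⟨mul_nonneg (hTnn k) (hGnn N), mul_le_mul_of_nonneg_left ?_ (hTnn k)⟩
        refine le_min (hG1 N) ?_
        have h2 := (hGinc 0 N).2
        rw [zero_add] at h2
        have h3 : ((N : ℝ) + 1) * δ ≤ k * δ :=
          mul_le_mul_of_nonneg_right (by exact_mod_cast hk) hδ0.le
        linarith
    rw [abs_of_nonneg (hs3.nonneg fun k => (key k).1)]
    exact hasSum_le (fun k => (key k).2) hs3 hpk.hasSum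
  have hc : 0 < (1 - a) / (a * m) := div_pos (by linarith) (by positivity)
  refine rec_bound G _ _ hc (fun N => ?_) N
  have hsum : (1 - a) * ∑ k ∈ Finset.range (N + 1), G k
      + a * ∑ k ∈ Finset.range (N + 1), T k * G (N - k) = (1 - a) * (N + 1) := by
    have h2 : ∑ k ∈ Finset.range (N + 1), T k * G (N - k) = 
        (1 - a) * ∑ k ∈ Finset.range (N + 1), ∑ j ∈ Finset.range (k + 1), ψ j * T (k - j) := by
      rw [ident2, Finset.mul_sum]
      refine Finset.sum_congr rfl fun k _ => ?_
      rw [hGS]; ring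
    have h3 : ∑ k ∈ Finset.range (N + 1),
        (G k + a * ∑ j ∈ Finset.range (k + 1), ψ j * T (k - j)) = N + 1 := by
      have h4 : ∀ k ∈ Finset.range (N + 1),
          (G k + a * ∑ j ∈ Finset.range (k + 1), ψ j * T (k - j)) = 1 := fun k _ => by
        rw [hGS k]; exact id1 k
      rw [Finset.sum_congr rfl h4]
      simp
    rw [Finset.sum_add_distrib, ← Finset.mul_sum] at h3
    rw [h2]
    linear_combination (1 - a) * h3
  have : G N + (1 - a) / (a * m) * ∑ k ∈ Finset.range (N + 1), G k - (1 - a) / (a * m) * (N + 1)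
      = (m * G N - ∑ k ∈ Finset.range (N + 1), T k * G (N - k)) / m := by
    field_simp
    linear_combination hsum
  rw [this, abs_div, abs_of_pos hm0]
  gcongr
  exact herr N

lemma exp_lip (u v : ℝ) (hu : 0 ≤ u) (hv : 0 ≤ v) :
    |Real.exp (-u) - Real.exp (-v)| ≤ |u - v| := by
  wlog huv : u ≤ v generalizing u v
  · rw [abs_sub_comm, abs_sub_comm u]
    exact this v u hv hu (le_of_not_ge huv)
  have h1 : Real.exp (-v) ≤ Real.exp (-u) := Real.exp_le_exp.2 (by linarith)
  rw [abs_of_nonneg (by linarith), abs_sub_comm, abs_of_nonneg (by linarith)]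
  have h2 : Real.exp (-v) = Real.exp (-u) * Real.exp (-(v - u)) := by
    rw [← Real.exp_add]; ring_nf
  have h3 := Real.add_one_le_exp (-(v - u))
  have h4 : Real.exp (-u) ≤ 1 := Real.exp_le_one_iff.2 (by linarith)
  have h5 := Real.exp_pos (-u)
  rw [h2]
  nlinarith

end LT

/-- light-tail corollary:
`sup_{x∈[0,1]} |∑_{i=0}^{⌊nx⌋} ψ^n_i (1-a_n) − (1 − e^{−(λ/m)x})| → 0`. -/
theorem psi_partial_sum_unif_conv_light_tail
    (φ : ℕ → ℝ) (hφnn : ∀ i, 0 ≤ φ i) (hφ0 : φ 0 = 0) (hφsum : ∑' i : ℕ, φ i = 1)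
    (m : ℝ) (hm : HasSum (fun i : ℕ => (i : ℝ) * φ i) m)
    (a : ℕ → ℝ) (ha : ∀ n, 1 ≤ n → 0 < a n ∧ a n < 1)
    (lam : ℝ) (hlam : 0 < lam)
    (haconv : Tendsto (fun n : ℕ => (n : ℝ) * (1 - a n)) atTop (nhds lam)) :
    Tendsto
      (fun n : ℕ => ⨆ x : Set.Icc (0:ℝ) 1,
        |(∑ i ∈ Finset.range (⌊(n : ℝ) * (x : ℝ)⌋₊ + 1), psiSeq (a n) φ i * (1 - a n)) -
          (1 - Real.exp (-(lam / m) * (x : ℝ)))|)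
      atTop (nhds 0) := by
  have hsm : Summable φ := by
    by_contra hns
    rw [tsum_eq_zero_of_not_summable hns] at hφsum
    norm_num at hφsum
  have h1 : HasSum φ 1 := hφsum ▸ hsm.hasSum
  have hm1 : 1 ≤ m := by
    refine hasSum_le (fun i => ?_) h1 hm
    rcases Nat.eq_zero_or_pos i with rfl | hi
    · simp [hφ0]
    · exact le_mul_of_one_le_left (hφnn i) (by exact_mod_cast hi)
  have hm0 : 0 < m := by linarith
  have hT := LT.tail_hasSum φ hφnn h1 hφ0 m hm
  set T : ℕ → ℝ := fun k => 1 - ∑ i ∈ Finset.range (k + 1), φ i with hTdef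
  have hTnn : ∀ k, 0 ≤ T k := fun k =>
    sub_nonneg.2 (sum_le_hasSum _ (fun i _ => hφnn i) h1)
  have hinv : Tendsto (fun n : ℕ => ((n : ℝ))⁻¹) atTop (nhds 0) :=
    tendsto_inv_atTop_nhds_zero_nat
  have h1a : Tendsto (fun n : ℕ => 1 - a n) atTop (nhds 0) := by
    have := hinv.mul haconv
    rw [zero_mul] at this
    refine this.congr' ?_
    filter_upwards [eventually_ge_atTop 1] with n hn
    have : (n : ℝ) ≠ 0 := by positivity
    field_simp
  have ha1 : Tendsto a atTop (nhds 1) := by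
    have := h1a.const_sub 1
    simpa using this
  have hδ : Tendsto (fun n => (1 - a n) / a n) atTop (nhds 0) := by
    have := h1a.div ha1 one_ne_zero
    rw [zero_div] at this
    exact this
  have heps : Tendsto (fun n => ∑' k : ℕ, T k * min 1 (k * ((1 - a n) / a n))) atTop
      (nhds 0) := by
    have : Tendsto (fun n => ∑' k : ℕ, T k * min 1 (k * ((1 - a n) / a n))) atTop
      (nhds (∑' k : ℕ, (0:ℝ))) := by
      refine tendsto_tsum_of_dominated_convergence (bound := T) hT.summable (fun k => ?_) ?_
      · have := ((tendsto_const_nhds (x := (1:ℝ))).min (hδ.const_mul (k : ℝ))).const_mul (T k)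
        simpa using this
      · filter_upwards [eventually_ge_atTop 1] with n hn k
        have h := ha n hn
        have hd : 0 ≤ (k : ℝ) * ((1 - a n) / a n) :=
          mul_nonneg (Nat.cast_nonneg k) (div_nonneg (by linarith) h.1.le)
        rw [Real.norm_of_nonneg (mul_nonneg (hTnn k) (le_min zero_le_one hd))]
        exact mul_le_of_le_one_right (hTnn k) (min_le_left _ _)
    simpa using this
  set μ := lam / m with hμ
  have hμ0 : 0 < μ := div_pos hlam hm0
  have hnc : Tendsto (fun n : ℕ => (n : ℝ) * ((1 - a n) / (a n * m))) atTop (nhds μ) := by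
    have := haconv.div (ha1.mul_const m) (by simpa using hm0.ne')
    rw [one_mul] at this
    refine this.congr fun n => ?_
    simp only [Pi.div_apply]
    rw [mul_div_assoc]
  have hnL := Real.tendsto_nat_mul_log_one_add_of_tendsto hnc
  have hL : Tendsto (fun n : ℕ => Real.log (1 + (1 - a n) / (a n * m))) atTop (nhds 0) := by
    have := hinv.mul hnL
    rw [zero_mul] at this
    refine this.congr' ?_
    filter_upwards [eventually_ge_atTop 1] with n hn
    have : (n : ℝ) ≠ 0 := by positivity
    field_simp
  set L : ℕ → ℝ := fun n => Real.log (1 + (1 - a n) / (a n * m)) with hLdef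
  have hbound : Tendsto (fun n => 2 * ((∑' k : ℕ, T k * min 1 (k * ((1 - a n) / a n))) / m)
      + (L n + |(n : ℝ) * L n - μ|)) atTop (nhds 0) := by
    have e1 := (heps.div_const m).const_mul 2
    have e2 := (hnL.sub_const μ).abs
    have := e1.add (hL.add e2)
    simpa using this
  refine squeeze_zero' (Eventually.of_forall fun n => Real.iSup_nonneg fun x => abs_nonneg _)
    ?_ hbound
  filter_upwards [eventually_ge_atTop 1] with n hn
  haveI : Nonempty (Set.Icc (0:ℝ) 1) := ⟨⟨0, by simp⟩⟩
  refine ciSup_le fun x => ?_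
  obtain ⟨x, hx0, hx1⟩ := x
  simp only
  have han := ha n hn
  have hc := LT.core φ hφnn h1 hφ0 m hm0 T hTdef hT (a n) han.1 han.2 ⌊(n : ℝ) * x⌋₊
  have hcpos : 0 < (1 - a n) / (a n * m) := div_pos (by linarith) (mul_pos han.1 hm0)
  have hLpos : 0 ≤ L n := Real.log_nonneg (by linarith)
  have hr : (1 / (1 + (1 - a n) / (a n * m))) ^ (⌊(n : ℝ) * x⌋₊ + 1)
      = Real.exp (-(L n * (⌊(n : ℝ) * x⌋₊ + 1))) := by
    have e1 : 1 / (1 + (1 - a n) / (a n * m)) = Real.exp (-L n) := by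
      rw [Real.exp_neg, Real.exp_log (by linarith), one_div]
    rw [e1, ← Real.exp_nat_mul]
    congr 1
    push_cast
    ring
  rw [hr] at hc
  have hlip := LT.exp_lip (L n * (⌊(n : ℝ) * x⌋₊ + 1)) (μ * x) (by positivity) (by positivity)
  have hnx : 0 ≤ (n : ℝ) * x := by positivity
  have hf1 := Nat.floor_le hnx
  have hf2 := Nat.lt_floor_add_one ((n : ℝ) * x)
  have hd : |L n * (⌊(n : ℝ) * x⌋₊ + 1) - μ * x| ≤ L n + |(n : ℝ) * L n - μ| := by
    have e : L n * (⌊(n : ℝ) * x⌋₊ + 1) - μ * x =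
        L n * (⌊(n : ℝ) * x⌋₊ + 1 - n * x) + (n * L n - μ) * x := by ring
    rw [e]
    refine (abs_add_le _ _).trans (add_le_add ?_ ?_)
    · rw [abs_of_nonneg (mul_nonneg hLpos (by linarith))]
      exact mul_le_of_le_one_right hLpos (by linarith)
    · rw [abs_mul, abs_of_nonneg hx0]
      exact mul_le_of_le_one_right (abs_nonneg _) hx1
  rw [neg_mul]
  have tri := abs_sub_le
    (∑ i ∈ Finset.range (⌊(n : ℝ) * x⌋₊ + 1), psiSeq (a n) φ i * (1 - a n))
    (1 - Real.exp (-(L n * (⌊(n : ℝ) * x⌋₊ + 1)))) (1 - Real.exp (-(μ * x)))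
  have e2 : |(1 - Real.exp (-(L n * (⌊(n : ℝ) * x⌋₊ + 1)))) - (1 - Real.exp (-(μ * x)))|
      = |Real.exp (-(L n * (⌊(n : ℝ) * x⌋₊ + 1))) - Real.exp (-(μ * x))| := by
    rw [abs_sub_comm]; congr 1; ring
  linarith
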